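/- arXiv:1903.06826 — 2 statements merged into one kernel-verified Lean document; each statement's English description precedes it below -/
import Mathlib

section
/- Let y be a nonzero real number and let (μ_n) be a sequence of reals such that the sequence (μ_n · y) is equidistributed modulo 1. Then (1/N) · #{0 ≤ n < N : sgn(cos(2π(3μ_n y − 1/4))) = sgn(cos(2π(μ_n y − 1/4)))} → 2/3 as N → ∞. (This shows the upper bound 2/3 in the universality law for sign correlations is attained.) -/
open Filter Real MeasureTheory
open scoped Classical

noncomputable def sgn (t : ℝ) : ℝ := if 0 < t then 1 else if t < 0 then -1 else 0

def EquidistributedMod1 (a : ℕ → ℝ) : Prop :=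
  ∀ c d : ℝ, 0 ≤ c → c ≤ d → d ≤ 1 →
    Tendsto (fun N : ℕ =>
      (((Finset.range N).filter (fun n => Int.fract (a n) ∈ Set.Icc c d)).card : ℝ) / N)
      atTop (nhds (d - c))

/-!
With `θ = 2πx` the two cosines are `sin 3θ` and `sin θ`, and `sin 3θ = (1 + 2 cos 2θ) sin θ`.
Hence the signs agree exactly when `cos 2θ > -1/2`, that is, when `2x` avoids `[1/3, 2/3]` modulo
one. If `x` runs through a sequence equidistributed modulo one, then so does `2x`, and the signs
disagree with density `1/3`.
-/

section Fract

variable {R : Type*} [CommRing R] [LinearOrder R] [IsStrictOrderedRing R]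
variable {K : Type*} [Field K] [LinearOrder K] [IsStrictOrderedRing K]

lemma fract_mem_Icc_one_iff [FloorRing R] {c x : R} :
    Int.fract x ∈ Set.Icc c 1 ↔ Int.fract x ∉ Set.Icc 0 c ∨ Int.fract x ∈ Set.Icc c c := by
  have h0 := Int.fract_nonneg x
  have h1 := Int.fract_lt_one x
  simp only [Set.mem_Icc]
  grind

lemma fract_natCast_mul_fract [FloorRing R] (k : ℕ) (x : R) :
    Int.fract (k * Int.fract x) = Int.fract (k * x) := by
  rw [← Int.fract_sub_intCast (k * x) (k * ⌊x⌋), Int.fract.eq_def x]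
  push_cast
  ring_nf

lemma natFloor_eq_of_mem_Icc_add [FloorSemiring R] {c d x : R} {j : ℕ} (hc : 0 ≤ c) (hd : d < 1)
    (hx : x ∈ Set.Icc (c + j) (d + j)) : ⌊x⌋₊ = j := by
  rw [Nat.floor_eq_iff (by linarith [hx.1, j.cast_nonneg (α := R)])]
  constructor <;> linarith [hx.1, hx.2]

lemma mem_Icc_div_iff {a b r t : K} (hr : 0 < r) :
    t ∈ Set.Icc (a / r) (b / r) ↔ r * t ∈ Set.Icc a b := by
  rw [← Set.preimage_const_mul_Icc₀ a b hr, Set.mem_preimage]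

lemma fract_natCast_mul_mem_Icc_iff [FloorRing K] {c d x : K} {k : ℕ}
    (hk : k ≠ 0) (hc : 0 ≤ c) (hd : d < 1) :
    Int.fract (k * x) ∈ Set.Icc c d ↔
      ∃ j < k, Int.fract x ∈ Set.Icc ((c + j) / k) ((d + j) / k) := by
  have hk' : (0 : K) < k := Nat.cast_pos.2 (Nat.pos_of_ne_zero hk)
  have hnonneg : 0 ≤ k * Int.fract x := mul_nonneg hk'.le (Int.fract_nonneg x)
  simp only [mem_Icc_div_iff hk', ← fract_natCast_mul_fract k x]
  constructor
  · intro h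
    refine ⟨⌊k * Int.fract x⌋₊, (Nat.floor_lt hnonneg).2 ?_, ?_⟩
    · exact mul_lt_of_lt_one_right hk' (Int.fract_lt_one x)
    · rwa [natCast_floor_eq_intCast_floor hnonneg, ← Set.sub_mem_Icc_iff_left, Int.self_sub_floor]
  · rintro ⟨j, -, hj⟩
    have hfract : Int.fract (k * Int.fract x) = k * Int.fract x - j := by
      rw [← Int.fract_sub_natCast _ j, Int.fract_eq_self]
      constructor <;> linarith [hj.1, hj.2]
    rwa [hfract, Set.sub_mem_Icc_iff_left]

end Fract

/-- The set `s` of natural numbers has natural density `δ`: the proportion of elements of `s` below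
`N` tends to `δ`. -/
def HasNaturalDensity (s : Set ℕ) (δ : ℝ) : Prop :=
  Tendsto (fun N : ℕ => (((Finset.range N).filter (· ∈ s)).card : ℝ) / N) atTop (nhds δ)

lemma hasNaturalDensity_iff_tendsto_card_filter {p : ℕ → Prop} [DecidablePred p] {δ : ℝ} :
    HasNaturalDensity {n | p n} δ ↔
      Tendsto (fun N : ℕ => (((Finset.range N).filter p).card : ℝ) / N) atTop (nhds δ) := by
  simp only [HasNaturalDensity, Set.mem_ofPred_eq]

namespace HasNaturalDensity

lemma empty : HasNaturalDensity ∅ 0 := by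
  simp [HasNaturalDensity]

lemma compl {s : Set ℕ} {δ : ℝ} (hs : HasNaturalDensity s δ) : HasNaturalDensity sᶜ (1 - δ) := by
  refine (hs.const_sub 1).congr' ?_
  filter_upwards [eventually_ne_atTop 0] with N hN
  have hcard := Finset.card_filter_add_card_filter_not (s := Finset.range N) (· ∈ s)
  rw [Finset.card_range] at hcard
  simp only [Set.mem_compl_iff]
  rw [one_sub_div (Nat.cast_ne_zero.2 hN), sub_eq_of_eq_add']
  exact_mod_cast hcard.symm

lemma union {s t : Set ℕ} {δ ε : ℝ} (hs : HasNaturalDensity s δ) (ht : HasNaturalDensity t ε)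
    (hst : Disjoint s t) : HasNaturalDensity (s ∪ t) (δ + ε) := by
  refine (hs.add ht).congr fun N => ?_
  simp only [Set.mem_union]
  rw [Finset.filter_or, Finset.card_union_of_disjoint, Nat.cast_add, add_div]
  exact Finset.disjoint_filter.2 fun n _ hn => Set.disjoint_left.1 hst hn

lemma biUnion {ι : Type*} {I : Finset ι} {s : ι → Set ℕ} {δ : ι → ℝ}
    (hs : ∀ i ∈ I, HasNaturalDensity (s i) (δ i)) (hdisj : (I : Set ι).PairwiseDisjoint s) :
    HasNaturalDensity (⋃ i ∈ I, s i) (∑ i ∈ I, δ i) := by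
  induction I using Finset.induction_on with
  | empty => simpa using empty
  | insert i I hi ih =>
    rw [Finset.set_biUnion_insert, Finset.sum_insert hi]
    rw [Finset.coe_insert, Set.pairwiseDisjoint_insert_of_notMem (mod_cast hi)] at hdisj
    refine (hs i (Finset.mem_insert_self i I)).union
      (ih (fun j hj => hs j (Finset.mem_insert_of_mem hj)) hdisj.1) ?_
    exact Set.disjoint_iUnion₂_right.2 hdisj.2

end HasNaturalDensity

lemma equidistributedMod1_iff_hasNaturalDensity {a : ℕ → ℝ} :
    EquidistributedMod1 a ↔ ∀ c d : ℝ, 0 ≤ c → c ≤ d → d ≤ 1 →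
      HasNaturalDensity {n | Int.fract (a n) ∈ Set.Icc c d} (d - c) := by
  simp only [EquidistributedMod1, hasNaturalDensity_iff_tendsto_card_filter]

lemma equidistributedMod1_of_forall_lt_one {a : ℕ → ℝ}
    (h : ∀ c d : ℝ, 0 ≤ c → c ≤ d → d < 1 →
      HasNaturalDensity {n | Int.fract (a n) ∈ Set.Icc c d} (d - c)) :
    EquidistributedMod1 a := by
  refine equidistributedMod1_iff_hasNaturalDensity.2 fun c d hc hcd hd => ?_
  rcases hd.lt_or_eq with hd | rfl
  · exact h c d hc hcd hd
  rcases hcd.lt_or_eq with hc1 | rfl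
  · have hunion := (h 0 c le_rfl hc hc1).compl.union (h c c hc le_rfl hc1) <|
      Set.disjoint_compl_left_iff_subset.2 fun n hn => ⟨hc.trans hn.1, hn.2⟩
    rw [sub_self, add_zero, sub_zero] at hunion
    simp only [fract_mem_Icc_one_iff (c := c)]
    exact hunion
  · have hempty : {n | Int.fract (a n) ∈ Set.Icc (1 : ℝ) 1} = ∅ :=
      Set.eq_empty_of_forall_notMem fun n hn => (Int.fract_lt_one (a n)).not_ge hn.1
    rw [hempty, sub_self]
    exact HasNaturalDensity.empty

lemma EquidistributedMod1.natCast_mul {a : ℕ → ℝ} {k : ℕ} (ha : EquidistributedMod1 a)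
    (hk : k ≠ 0) :
    EquidistributedMod1 fun n => k * a n := by
  -- Multiplication by `k` pulls `[c, d]` back to `k` intervals, disjoint as long as `d < 1`; for
  -- `d = 1` and `c = 0` they share endpoints.
  refine equidistributedMod1_of_forall_lt_one fun c d hc hcd hd => ?_
  have hk' : (0 : ℝ) < k := Nat.cast_pos.2 (Nat.pos_of_ne_zero hk)
  have hpiece : ∀ j ∈ Finset.range k, HasNaturalDensity
      {n | Int.fract (a n) ∈ Set.Icc ((c + j) / k) ((d + j) / k)} ((d - c) / k) := by
    intro j hj
    have hjk : (j : ℝ) + 1 ≤ k := mod_cast Finset.mem_range.1 hj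
    convert equidistributedMod1_iff_hasNaturalDensity.1 ha ((c + j) / k) ((d + j) / k)
      (by positivity) (by gcongr) ((div_le_one hk').2 (by linarith)) using 1
    ring
  have hdisj : (Finset.range k : Set ℕ).PairwiseDisjoint fun j =>
      {n | Int.fract (a n) ∈ Set.Icc ((c + j) / k) ((d + j) / k)} := by
    refine fun i _ j _ hij => Set.disjoint_left.2 fun n hi hj => hij ?_
    exact (natFloor_eq_of_mem_Icc_add hc hd ((mem_Icc_div_iff hk').1 hi)).symm.trans
      (natFloor_eq_of_mem_Icc_add hc hd ((mem_Icc_div_iff hk').1 hj))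
  convert HasNaturalDensity.biUnion hpiece hdisj using 1
  · ext n
    simp [-Set.mem_Icc, fract_natCast_mul_mem_Icc_iff hk hc hd]
  · rw [Finset.sum_const, Finset.card_range, nsmul_eq_mul, mul_div_cancel₀ _ hk'.ne']

lemma sgn_eq_sign (t : ℝ) : sgn t = SignType.sign t := by
  rcases lt_trichotomy t 0 with ht | rfl | ht
  · simp [sgn, ht, ht.not_gt]
  · simp [sgn]
  · simp [sgn, ht]

lemma sgn_eq_sgn_iff {s t : ℝ} : sgn s = sgn t ↔ SignType.sign s = SignType.sign t := by
  have hinj : Function.Injective (SignType.cast : SignType → ℝ) := by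
    intro u v
    cases u <;> cases v <;> norm_num
  rw [sgn_eq_sign, sgn_eq_sign, hinj.eq_iff]

lemma sgn_mul_eq_right_iff {s t : ℝ} : sgn (s * t) = sgn t ↔ 0 < s ∨ t = 0 := by
  rcases eq_or_ne t 0 with rfl | ht
  · simp
  · rw [sgn_eq_sgn_iff, sign_mul, mul_eq_right₀ (sign_ne_zero.2 ht), sign_eq_one_iff,
      or_iff_left ht]

lemma sin_three_mul_eq_mul_sin (θ : ℝ) : sin (3 * θ) = (1 + 2 * cos (2 * θ)) * sin θ := by
  rw [sin_three_mul, cos_two_mul, cos_sq']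
  ring

lemma sgn_sin_three_mul_eq_iff (θ : ℝ) :
    sgn (sin (3 * θ)) = sgn (sin θ) ↔ -1 / 2 < cos (2 * θ) := by
  have hzero : sin θ = 0 → -1 / 2 < cos (2 * θ) := fun h => by
    rw [cos_two_mul, cos_sq', h]
    norm_num
  have hpos : 0 < 1 + 2 * cos (2 * θ) ↔ -1 / 2 < cos (2 * θ) := by
    constructor <;> intro h <;> linarith
  rw [sin_three_mul_eq_mul_sin, sgn_mul_eq_right_iff, hpos, or_iff_left_of_imp hzero]

lemma cos_two_pi_mul_eq_neg_cos_abs (x : ℝ) :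
    cos (2 * π * x) = -cos (2 * π * |Int.fract x - 1 / 2|) := by
  have habs : 2 * π * |Int.fract x - 1 / 2| = |2 * π * x - ⌊x⌋ * (2 * π) - π| := by
    rw [← abs_of_pos two_pi_pos, ← abs_mul, abs_of_pos two_pi_pos, ← Int.self_sub_floor]
    ring_nf
  rw [habs, cos_abs, cos_sub_pi, neg_neg, cos_sub_int_mul_two_pi]

lemma neg_half_lt_cos_two_pi_mul_iff (x : ℝ) :
    -1 / 2 < cos (2 * π * x) ↔ Int.fract x ∉ Set.Icc (1 / 3 : ℝ) (2 / 3) := by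
  have hπ := pi_pos
  have hle : |Int.fract x - 1 / 2| ≤ 1 / 2 :=
    abs_le.2 ⟨by linarith [Int.fract_nonneg x], by linarith [Int.fract_lt_one x]⟩
  have hmem : Int.fract x ∈ Set.Icc (1 / 3 : ℝ) (2 / 3) ↔ |Int.fract x - 1 / 2| ≤ 1 / 6 := by
    rw [abs_le, Set.mem_Icc]
    constructor <;> rintro ⟨h1, h2⟩ <;> constructor <;> linarith
  calc -1 / 2 < cos (2 * π * x)
    _ ↔ cos (2 * π * |Int.fract x - 1 / 2|) < cos (π / 3) := by
      rw [cos_two_pi_mul_eq_neg_cos_abs, cos_pi_div_three, neg_div, neg_lt_neg_iff]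
    _ ↔ π / 3 < 2 * π * |Int.fract x - 1 / 2| :=
      strictAntiOn_cos.lt_iff_gt ⟨by positivity, by nlinarith⟩ ⟨by positivity, by linarith⟩
    _ ↔ 1 / 6 < |Int.fract x - 1 / 2| := by
      rw [← div_lt_iff₀' two_pi_pos, show π / 3 / (2 * π) = 1 / 6 by field_simp; norm_num]
    _ ↔ Int.fract x ∉ Set.Icc (1 / 3 : ℝ) (2 / 3) := by
      rw [hmem, not_le]

lemma sgn_cos_three_mul_eq_iff (x : ℝ) :
    sgn (cos (2 * π * (3 * x - 1 / 4))) = sgn (cos (2 * π * (x - 1 / 4))) ↔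
      Int.fract (2 * x) ∉ Set.Icc (1 / 3 : ℝ) (2 / 3) := by
  rw [← neg_half_lt_cos_two_pi_mul_iff, mul_left_comm (2 * π), ← sgn_sin_three_mul_eq_iff,
    ← cos_sub_pi_div_two, ← cos_sub_pi_div_two]
  ring_nf

theorem sign_correlation_upper_bound_attained
    (y : ℝ) (hy : y ≠ 0) (μ : ℕ → ℝ)
    (hequi : EquidistributedMod1 (fun n => μ n * y)) :
    Tendsto (fun N : ℕ =>
      (((Finset.range N).filter (fun n =>
        sgn (Real.cos (2 * π * (3 * (μ n * y) - 1/4))) =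
          sgn (Real.cos (2 * π * (μ n * y - 1/4))))).card : ℝ) / N)
      atTop (nhds (2/3)) := by
  have hdouble : EquidistributedMod1 fun n => 2 * (μ n * y) :=
    mod_cast hequi.natCast_mul two_ne_zero
  have hdisagree := equidistributedMod1_iff_hasNaturalDensity.1 hdouble (1 / 3) (2 / 3)
    (by norm_num) (by norm_num) (by norm_num)
  have hagree := hdisagree.compl
  rw [show (1 : ℝ) - (2 / 3 - 1 / 3) = 2 / 3 by norm_num] at hagree
  rw [← hasNaturalDensity_iff_tendsto_card_filter]
  simp only [sgn_cos_three_mul_eq_iff]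
  exact hagree
end

section
/- Let D ⊆ ℝ, let w_n : D → ℝ (n ∈ ℕ), φ : D × ℕ → ℝ, ϕ : D → ℝ, θ ∈ ℝ, and (μ_n) a sequence of reals. Suppose x, y ∈ D are such that there exist sequences ε_n(x) → 0 and ε_n(y) → 0 with w_n(x) = (1 + ε_n(x)) · φ(x,n) · cos(2π(μ_n ϕ(x) − θ)) and w_n(y) = (1 + ε_n(y)) · φ(y,n) · cos(2π(μ_n ϕ(y) − θ)) for all n, and that φ(x,n) · φ(y,n) > 0 for all n. Let p, q be nonzero coprime integers with q · ϕ(x) = p · ϕ(y) and p/ϕ(x) > 0, and assume the sequence (μ_n ϕ(x)/p) is equidistributed modulo 1. Then (1/N) · #{0 ≤ n < N : sgn(w_n(x)) = sgn(w_n(y))} → 1/2 + (1/2) ∫₀¹ Φ(pt − θ, qt − θ) dt as N → ∞, where Φ(u,v) = sgn(cos(2πu)·cos(2πv)). -/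
open Filter Real MeasureTheory
open scoped Classical

noncomputable def Φ (u v : ℝ) : ℝ := sgn (Real.cos (2 * π * u) * Real.cos (2 * π * v))

/-!
Let `s n = μ_n ϕ(x)` and `t n = μ_n ϕ(y)`, so that `q * s n = p * t n`. For large `n` the product
`w_n(x) w_n(y)` has the sign of `g (s n / p)`, where
`g τ = cos (2π(p τ - θ)) cos (2π(q τ - θ))` has period `1` and only countably many zeros.
The signs of `w_n(x)` and `w_n(y)` therefore agree whenever `g (s n / p) > 0`, and only if
`g (s n / p) ≥ 0`. By the portmanteau theorem, an equidistributed sequence visits `{g > 0}` and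
`{g ≥ 0}`, whose frontiers consist of zeros of `g`, with frequency equal to their common Lebesgue
measure on `[0, 1]`, and this measure is `1/2 + (1/2) ∫ sgn g`.
-/

open Asymptotics ProbabilityTheory

section NaturalDensity

/-- The predicate `P` on the natural numbers has natural density `l`: the proportion of `n < N`
satisfying `P` tends to `l`. -/
def HasDensity (P : ℕ → Prop) (l : ℝ) : Prop :=
  Tendsto (fun N : ℕ => (((Finset.range N).filter P).card : ℝ) / N) atTop (nhds l)

lemma card_filter_range_le_add {P Q : ℕ → Prop} {m : ℕ} (h : ∀ n ≥ m, P n → Q n) (N : ℕ) :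
    ((Finset.range N).filter P).card ≤ ((Finset.range N).filter Q).card + m := by
  have hsub : (Finset.range N).filter P ⊆ (Finset.range N).filter Q ∪ Finset.range m := by
    intro n hn
    simp only [Finset.mem_union, Finset.mem_filter, Finset.mem_range] at hn ⊢
    rcases lt_or_ge n m with hnm | hnm
    · exact Or.inr hnm
    · exact Or.inl ⟨hn.1, h n hnm hn.2⟩
  simpa using (Finset.card_le_card hsub).trans (Finset.card_union_le _ _)

lemma HasDensity.of_eventually_imp {P Q R : ℕ → Prop} {l : ℝ} (hP : HasDensity P l)
    (hR : HasDensity R l) (hPQ : ∀ᶠ n in atTop, P n → Q n) (hQR : ∀ᶠ n in atTop, Q n → R n) :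
    HasDensity Q l := by
  obtain ⟨m, hm⟩ := eventually_atTop.1 (hPQ.and hQR)
  have hle {S T : ℕ → Prop} (h : ∀ n ≥ m, S n → T n) (N : ℕ) :
      (((Finset.range N).filter S).card : ℝ) / N ≤
        (((Finset.range N).filter T).card : ℝ) / N + (m : ℝ) / N := by
    rw [← add_div]
    gcongr
    exact_mod_cast card_filter_range_le_add h N
  have hm0 := tendsto_const_div_atTop_nhds_zero_nat (m : ℝ)
  exact tendsto_of_tendsto_of_tendsto_of_le_of_le (by simpa using hP.sub hm0)
    (by simpa using hR.add hm0)
    (fun N => sub_le_iff_le_add.2 (hle (fun n hn => (hm n hn).1) N))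
    (hle fun n hn => (hm n hn).2)

end NaturalDensity

section Sgn

lemma sgn_of_pos {t : ℝ} (ht : 0 < t) : sgn t = 1 := if_pos ht

lemma sgn_of_neg {t : ℝ} (ht : t < 0) : sgn t = -1 := by
  rw [sgn, if_neg ht.le.not_gt, if_pos ht]

lemma sgn_eq_coe_sign (t : ℝ) : sgn t = (SignType.sign t : ℝ) := by
  rw [sgn, sign_apply]
  split_ifs <;> simp

lemma sgn_mul (s t : ℝ) : sgn (s * t) = sgn s * sgn t := by
  simp only [sgn_eq_coe_sign, sign_mul, SignType.coe_mul]

lemma sgn_pos_iff {t : ℝ} : 0 < sgn t ↔ 0 < t := by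
  unfold sgn
  split_ifs <;> grind

lemma sgn_nonneg_iff {t : ℝ} : 0 ≤ sgn t ↔ 0 ≤ t := by
  unfold sgn
  split_ifs <;> grind

lemma sgn_eq_sgn_of_mul_pos {s t : ℝ} (h : 0 < s * t) : sgn s = sgn t := by
  rcases pos_and_pos_or_neg_and_neg_of_mul_pos h with ⟨hs, ht⟩ | ⟨hs, ht⟩
  · rw [sgn_of_pos hs, sgn_of_pos ht]
  · rw [sgn_of_neg hs, sgn_of_neg ht]

lemma mul_nonneg_of_sgn_eq_sgn {s t : ℝ} (h : sgn s = sgn t) : 0 ≤ s * t := by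
  rw [← sgn_nonneg_iff, sgn_mul, h]
  exact mul_self_nonneg _

lemma sgn_mul_of_pos_left {c : ℝ} (hc : 0 < c) (t : ℝ) : sgn (c * t) = sgn t := by
  rw [sgn_mul, sgn_of_pos hc, one_mul]

variable {α : Type*} {l : Filter α}

lemma eventually_sgn_eq_of_isEquivalent {u v : α → ℝ} (h : u ~[l] v) :
    ∀ᶠ n in l, sgn (u n) = sgn (v n) := by
  obtain ⟨c, hc, huv⟩ := h.exists_eq_mul
  filter_upwards [hc.eventually_const_lt one_pos, huv] with n hcn huvn
  rw [huvn, Pi.mul_apply, sgn_mul_of_pos_left hcn]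

lemma isEquivalent_mul_of_exists_eq_one_add_mul_mul {u a b : α → ℝ}
    (h : ∃ ε : α → ℝ, Tendsto ε l (nhds 0) ∧ ∀ n, u n = (1 + ε n) * a n * b n) :
    u ~[l] fun n => a n * b n := by
  obtain ⟨ε, hε, hu⟩ := h
  refine isEquivalent_iff_exists_eq_mul.2 ⟨fun n => 1 + ε n, by simpa using hε.const_add 1, ?_⟩
  exact .of_forall fun n => (hu n).trans (mul_assoc _ _ _)

lemma integral_sgn {Ω : Type*} [MeasurableSpace Ω] {μ : Measure Ω} [IsProbabilityMeasure μ]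
    {g : Ω → ℝ} (hg : Measurable g) (hZ : μ {ω | g ω = 0} = 0) :
    ∫ ω, sgn (g ω) ∂μ = 2 * μ.real {ω | 0 < g ω} - 1 := by
  have hpos : MeasurableSet {ω | 0 < g ω} := measurableSet_lt measurable_const hg
  have hae : ∀ᵐ ω ∂μ, sgn (g ω) = 2 * {ω | 0 < g ω}.indicator 1 ω - 1 := by
    filter_upwards [measure_eq_zero_iff_ae_notMem.1 hZ] with ω hω
    rcases lt_or_gt_of_ne hω with h | h
    · rw [sgn_of_neg h, Set.indicator_of_notMem (by simpa using h.le)]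
      norm_num
    · rw [sgn_of_pos h, Set.indicator_of_mem (by simpa using h)]
      norm_num
  rw [integral_congr_ae hae, integral_sub (((integrable_const 1).indicator hpos).const_mul 2)
    (integrable_const 1), integral_const_mul, integral_indicator_one hpos]
  simp

end Sgn

section EmpiricalMeasure

variable {Ω : Type*} [MeasurableSpace Ω]

/-- The empirical distribution of the first `N + 1` terms of the sequence `x`; the shift by one
makes it a probability measure for every `N`. -/
noncomputable def empiricalMeasure (x : ℕ → Ω) (N : ℕ) : ProbabilityMeasure Ω :=
  ⟨(uniformOn (Finset.range (N + 1) : Set ℕ)).map x,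
    have := isProbabilityMeasure_uniformOn (Finset.finite_toSet (Finset.range (N + 1))) ⟨0, by simp⟩
    Measure.isProbabilityMeasure_map measurable_from_top.aemeasurable⟩

lemma empiricalMeasure_real (x : ℕ → Ω) (N : ℕ) {E : Set Ω} (hE : MeasurableSet E) :
    (empiricalMeasure x N : Measure Ω).real E =
      (((Finset.range (N + 1)).filter (fun n => x n ∈ E)).card : ℝ) / ((N + 1 : ℕ) : ℝ) := by
  have hset : (Finset.range (N + 1) : Set ℕ) ∩ x ⁻¹' E =
      ((Finset.range (N + 1)).filter (fun n => x n ∈ E) : Finset ℕ) := by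
    ext n
    simp
  rw [measureReal_def, empiricalMeasure, ProbabilityMeasure.coe_mk,
    Measure.map_apply measurable_from_top hE, uniformOn, cond_apply (Finset.measurableSet _),
    hset, Measure.count_apply_finset, Measure.count_apply_finset, ENNReal.toReal_mul,
    ENNReal.toReal_inv, ENNReal.toReal_natCast, ENNReal.toReal_natCast, Finset.card_range,
    div_eq_inv_mul]

variable {x : ℕ → Ω} {μ : ProbabilityMeasure Ω}

lemma tendsto_empiricalMeasure_apply_iff {E : Set Ω} (hE : MeasurableSet E) :
    Tendsto (fun N => empiricalMeasure x N E) atTop (nhds (μ E)) ↔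
      HasDensity (fun n => x n ∈ E) ((μ : Measure Ω).real E) := by
  rw [← NNReal.tendsto_coe]
  simp only [← ProbabilityMeasure.measureReal_eq_coe_coeFn, empiricalMeasure_real x _ hE]
  exact tendsto_add_atTop_iff_nat
    (f := fun N : ℕ => (((Finset.range N).filter (x · ∈ E)).card : ℝ) / N) 1

variable [TopologicalSpace Ω] [OpensMeasurableSpace Ω] [HasOuterApproxClosed Ω]

lemma hasDensity_mem_of_null_frontier (hx : Tendsto (empiricalMeasure x) atTop (nhds μ))
    {E : Set Ω} (hE : MeasurableSet E) (hfr : (μ : Measure Ω) (frontier E) = 0) :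
    HasDensity (fun n => x n ∈ E) ((μ : Measure Ω).real E) :=
  (tendsto_empiricalMeasure_apply_iff hE).1 <|
    ProbabilityMeasure.tendsto_measure_of_null_frontier_of_tendsto hx
      ((μ.null_iff_toMeasure_null _).2 hfr)

lemma hasDensity_of_pos_imp_of_imp_nonneg (hx : Tendsto (empiricalMeasure x) atTop (nhds μ))
    {g : Ω → ℝ} (hg : Continuous g) (hZ : (μ : Measure Ω) {ω | g ω = 0} = 0) {P : ℕ → Prop}
    (hpos : ∀ᶠ n in atTop, 0 < g (x n) → P n) (hnonneg : ∀ᶠ n in atTop, P n → 0 ≤ g (x n)) :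
    HasDensity P ((μ : Measure Ω).real {ω | 0 < g ω}) := by
  have hfreq_pos := hasDensity_mem_of_null_frontier hx
    (measurableSet_lt measurable_const hg.measurable)
    (measure_mono_null ((frontier_lt_subset_eq continuous_const hg).trans fun _ => Eq.symm) hZ)
  have hfreq_nonneg := hasDensity_mem_of_null_frontier hx
    (measurableSet_le measurable_const hg.measurable)
    (measure_mono_null ((frontier_le_subset_eq continuous_const hg).trans fun _ => Eq.symm) hZ)
  have hae : {ω | 0 ≤ g ω} =ᵐ[(μ : Measure Ω)] {ω | 0 < g ω} := by
    filter_upwards [measure_eq_zero_iff_ae_notMem.1 hZ] with ω hω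
    exact propext (Ne.le_iff_lt (Ne.symm hω))
  rw [measureReal_congr hae] at hfreq_nonneg
  exact hfreq_pos.of_eventually_imp hfreq_nonneg hpos hnonneg

theorem hasDensity_sgn_eq_sgn (hx : Tendsto (empiricalMeasure x) atTop (nhds μ)) {g : Ω → ℝ}
    (hg : Continuous g) (hZ : (μ : Measure Ω) {ω | g ω = 0} = 0) {u v : ℕ → ℝ}
    (huv : ∀ᶠ n in atTop, sgn (u n * v n) = sgn (g (x n))) :
    HasDensity (fun n => sgn (u n) = sgn (v n)) (1 / 2 + (1 / 2) * ∫ ω, sgn (g ω) ∂μ) := by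
  have hlim : 1 / 2 + (1 / 2) * ∫ ω, sgn (g ω) ∂μ = (μ : Measure Ω).real {ω | 0 < g ω} := by
    rw [integral_sgn hg.measurable hZ]
    ring
  rw [hlim]
  refine hasDensity_of_pos_imp_of_imp_nonneg hx hg hZ ?_ ?_
  · filter_upwards [huv] with n hn hpos
    exact sgn_eq_sgn_of_mul_pos (sgn_pos_iff.1 (hn ▸ sgn_pos_iff.2 hpos))
  · filter_upwards [huv] with n hn heq
    exact sgn_nonneg_iff.1 (hn ▸ sgn_nonneg_iff.2 (mul_nonneg_of_sgn_eq_sgn heq))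

end EmpiricalMeasure

section Equidistribution

/-- Lebesgue measure on the unit interval, as a probability measure on `ℝ`; the weak limit of the
empirical distributions of the fractional parts of an equidistributed sequence. -/
noncomputable def unitIntervalLebesgue : ProbabilityMeasure ℝ :=
  ⟨volume.restrict (Set.Icc 0 1), ⟨by simp⟩⟩

lemma unitIntervalLebesgue_real_Icc (c d : ℝ) :
    (unitIntervalLebesgue : Measure ℝ).real (Set.Icc c d) = max (min d 1 - max c 0) 0 := by
  rw [measureReal_def, unitIntervalLebesgue, ProbabilityMeasure.coe_mk,
    Measure.restrict_apply measurableSet_Icc, Set.Icc_inter_Icc, Real.volume_Icc,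
    ENNReal.toReal_ofReal']

lemma unitIntervalLebesgue_eq_zero_of_countable {s : Set ℝ} (hs : s.Countable) :
    (unitIntervalLebesgue : Measure ℝ) s = 0 :=
  hs.measure_zero (volume.restrict (Set.Icc 0 1))

lemma integral_unitIntervalLebesgue (f : ℝ → ℝ) :
    ∫ t, f t ∂(unitIntervalLebesgue : Measure ℝ) = ∫ t in (0 : ℝ)..1, f t := by
  rw [intervalIntegral.integral_of_le zero_le_one, ← integral_Icc_eq_integral_Ioc]
  rfl

lemma EquidistributedMod1.hasDensity_fract_mem_Icc {a : ℕ → ℝ} (ha : EquidistributedMod1 a)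
    (c d : ℝ) :
    HasDensity (fun n => Int.fract (a n) ∈ Set.Icc c d)
      ((unitIntervalLebesgue : Measure ℝ).real (Set.Icc c d)) := by
  have hclip (n : ℕ) : Int.fract (a n) ∈ Set.Icc c d ↔
      Int.fract (a n) ∈ Set.Icc (max c 0) (min d 1) := by
    simp [Int.fract_nonneg, (Int.fract_lt_one (a n)).le]
  simp only [hclip, unitIntervalLebesgue_real_Icc]
  rcases le_or_gt (max c 0) (min d 1) with h | h
  · rw [max_eq_left (sub_nonneg.2 h)]
    -- `convert` identifies the two decidability instances for membership in an interval.
    unfold HasDensity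
    convert ha _ _ (le_max_right _ _) h (min_le_right _ _)
  · simp [HasDensity, Set.Icc_eq_empty (not_le.2 h), max_eq_right (sub_nonpos.2 h.le)]

lemma EquidistributedMod1.tendsto_empiricalMeasure {a : ℕ → ℝ} (ha : EquidistributedMod1 a) :
    Tendsto (empiricalMeasure fun n => Int.fract (a n)) atTop (nhds unitIntervalLebesgue) := by
  have hpi : IsPiSystem {s : Set ℝ | ∃ c d, s = Set.Icc c d} := by
    rintro _ ⟨c, d, rfl⟩ _ ⟨c', d', rfl⟩ -
    exact ⟨_, _, Set.Icc_inter_Icc⟩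
  refine hpi.tendsto_probabilityMeasure_of_tendsto_of_mem ?_ ?_ ?_
  · rintro _ ⟨c, d, rfl⟩
    exact measurableSet_Icc
  · intro u hu x hx
    obtain ⟨r, hr, hru⟩ := Metric.nhds_basis_closedBall.mem_iff.1 (hu.mem_nhds hx)
    exact ⟨_, ⟨x - r, x + r, Real.closedBall_eq_Icc⟩, Metric.closedBall_mem_nhds x hr, hru⟩
  · rintro _ ⟨c, d, rfl⟩
    exact (tendsto_empiricalMeasure_apply_iff measurableSet_Icc).2 (ha.hasDensity_fract_mem_Icc c d)

end Equidistribution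

section CosProduct

lemma countable_setOf_cos_eq_zero {k : ℝ} (hk : k ≠ 0) (θ : ℝ) :
    {t : ℝ | Real.cos (2 * π * (k * t - θ)) = 0}.Countable := by
  refine (Set.countable_range (fun m : ℤ => (((2 * m + 1) / 4 + θ) / k : ℝ))).mono ?_
  intro t ht
  obtain ⟨m, hm⟩ := Real.cos_eq_zero_iff.1 ht
  have hphase : k * t - θ = (2 * m + 1) / 4 := by
    apply mul_left_cancel₀ Real.two_pi_pos.ne'
    linarith
  refine ⟨m, (eq_div_of_mul_eq hk ?_).symm⟩
  linarith

lemma periodic_cos_two_pi_mul_sub (k : ℤ) (θ : ℝ) :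
    Function.Periodic (fun t : ℝ => Real.cos (2 * π * (k * t - θ))) 1 := by
  intro t
  have hshift : 2 * π * (k * (t + 1) - θ) = 2 * π * (k * t - θ) + k * (2 * π) := by ring
  simp only [hshift, Real.cos_add_int_mul_two_pi]

lemma apply_fract_of_periodic {R β : Type*} [Ring R] [LinearOrder R] [FloorRing R] {f : R → β}
    (hf : Function.Periodic f 1) (t : R) : f (Int.fract t) = f t := by
  rw [← Int.self_sub_floor, ← mul_one (⌊t⌋ : R), hf.sub_int_mul_eq]

/-- The argument of `sgn` in `Φ`, along the line `t ↦ (p * t - θ₁, q * t - θ₂)`. -/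
noncomputable def cosProduct (p q : ℤ) (θ₁ θ₂ t : ℝ) : ℝ :=
  Real.cos (2 * π * (p * t - θ₁)) * Real.cos (2 * π * (q * t - θ₂))

lemma continuous_cosProduct (p q : ℤ) (θ₁ θ₂ : ℝ) : Continuous (cosProduct p q θ₁ θ₂) := by
  unfold cosProduct
  fun_prop

lemma cosProduct_fract (p q : ℤ) (θ₁ θ₂ t : ℝ) :
    cosProduct p q θ₁ θ₂ (Int.fract t) = cosProduct p q θ₁ θ₂ t :=
  apply_fract_of_periodic
    ((periodic_cos_two_pi_mul_sub p θ₁).mul (periodic_cos_two_pi_mul_sub q θ₂)) t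

lemma countable_setOf_cosProduct_eq_zero {p q : ℤ} (hp : p ≠ 0) (hq : q ≠ 0) (θ₁ θ₂ : ℝ) :
    {t | cosProduct p q θ₁ θ₂ t = 0}.Countable :=
  ((countable_setOf_cos_eq_zero (Int.cast_ne_zero.2 hp) θ₁).union
    (countable_setOf_cos_eq_zero (Int.cast_ne_zero.2 hq) θ₂)).mono fun _ => mul_eq_zero.1

end CosProduct

theorem sign_correlation_limit_formula_general {p q : ℤ} (hp : p ≠ 0) (hq : q ≠ 0)
    {s t : ℕ → ℝ} (hst : ∀ n, q * s n = p * t n) (hequi : EquidistributedMod1 fun n => s n / p)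
    {θ₁ θ₂ : ℝ} {u v A B : ℕ → ℝ} (hAB : ∀ᶠ n in atTop, 0 < A n * B n)
    (hu : u ~[atTop] fun n => A n * Real.cos (2 * π * (s n - θ₁)))
    (hv : v ~[atTop] fun n => B n * Real.cos (2 * π * (t n - θ₂))) :
    HasDensity (fun n => sgn (u n) = sgn (v n))
      (1 / 2 + (1 / 2) * ∫ τ in (0 : ℝ)..1, Φ (p * τ - θ₁) (q * τ - θ₂)) := by
  have hp' : (p : ℝ) ≠ 0 := Int.cast_ne_zero.2 hp
  have hs (n : ℕ) : p * (s n / p) = s n := mul_div_cancel₀ (s n) hp'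
  have ht (n : ℕ) : q * (s n / p) = t n := by rw [← mul_div_assoc, hst, mul_div_cancel_left₀ _ hp']
  have hsgn : ∀ᶠ n in atTop,
      sgn (u n * v n) = sgn (cosProduct p q θ₁ θ₂ (Int.fract (s n / p))) := by
    filter_upwards [eventually_sgn_eq_of_isEquivalent (hu.mul hv), hAB] with n huv hABn
    calc sgn (u n * v n)
        = sgn (A n * Real.cos (2 * π * (s n - θ₁)) * (B n * Real.cos (2 * π * (t n - θ₂)))) := huv
      _ = sgn (A n * B n * cosProduct p q θ₁ θ₂ (s n / p)) := by
          rw [cosProduct, hs, ht, mul_mul_mul_comm]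
      _ = sgn (cosProduct p q θ₁ θ₂ (Int.fract (s n / p))) := by
          rw [sgn_mul_of_pos_left hABn, cosProduct_fract]
  have hdensity := hasDensity_sgn_eq_sgn hequi.tendsto_empiricalMeasure
    (continuous_cosProduct p q θ₁ θ₂)
    (unitIntervalLebesgue_eq_zero_of_countable (countable_setOf_cosProduct_eq_zero hp hq θ₁ θ₂))
    hsgn
  rwa [integral_unitIntervalLebesgue] at hdensity

theorem sign_correlation_limit_formula
    (D : Set ℝ) (w : ℕ → ℝ → ℝ) (φ : ℝ → ℕ → ℝ) (ϕ : ℝ → ℝ) (θ : ℝ) (μ : ℕ → ℝ)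
    (x y : ℝ) (hx : x ∈ D) (hy : y ∈ D)
    (hax : ∃ ε : ℕ → ℝ, Tendsto ε atTop (nhds 0) ∧
      ∀ n, w n x = (1 + ε n) * φ x n * Real.cos (2 * π * (μ n * ϕ x - θ)))
    (hay : ∃ ε : ℕ → ℝ, Tendsto ε atTop (nhds 0) ∧
      ∀ n, w n y = (1 + ε n) * φ y n * Real.cos (2 * π * (μ n * ϕ y - θ)))
    (hφ : ∀ n, φ x n * φ y n > 0)
    (p q : ℤ) (hp : p ≠ 0) (hq : q ≠ 0) (hcop : IsCoprime p q)
    (hpq : (q : ℝ) * ϕ x = (p : ℝ) * ϕ y)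
    (hpos : (p : ℝ) / ϕ x > 0)
    (hequi : EquidistributedMod1 (fun n => μ n * ϕ x / (p : ℝ))) :
    Tendsto (fun N : ℕ =>
      (((Finset.range N).filter (fun n => sgn (w n x) = sgn (w n y))).card : ℝ) / N)
      atTop (nhds (1/2 + (1/2) * ∫ t in (0:ℝ)..1, Φ ((p : ℝ) * t - θ) ((q : ℝ) * t - θ))) :=
  sign_correlation_limit_formula_general hp hq (fun n => by linear_combination μ n * hpq) hequi
    (.of_forall hφ) (isEquivalent_mul_of_exists_eq_one_add_mul_mul hax)
    (isEquivalent_mul_of_exists_eq_one_add_mul_mul hay)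
end
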